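/- arXiv:1409.6011 — 3 statements merged into one kernel-verified Lean document; each statement's English description precedes it below -/
import Mathlib

section
/- Let n ≥ 1, R₁ > 0, σ > 0, and 0 < α ≤ 1/2. Let f : ℝⁿ → ℝ≥0 be a logconcave function whose support is a compact subset of R₁·B_n, and define G(s) = ∫_{ℝⁿ} f(x) e^{−‖x‖²/(2s)} dx for s > 0. Then G(σ²/(1+α)) · G(σ²/(1−α)) ≤ exp(2·R₁²·α²/σ²) · G(σ²)². Equivalently, for X drawn from the distribution with density proportional to g(x) = f(x)e^{−‖x‖²/(2σ²(1/(1+α)))} and Y the ratio of consecutive-phase densities, E(Y²)/E(Y)² ≤ exp(2R₁²α²/σ²). -/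
open MeasureTheory

/-- A nonnegative function is logconcave if
`f(λx + (1-λ)y) ≥ f(x)^λ · f(y)^{1-λ}`. -/
def LogConcaveFn {E : Type*} [AddCommMonoid E] [Module ℝ E] (f : E → ℝ) : Prop :=
  ∀ x y : E, ∀ l : ℝ, 0 ≤ l → l ≤ 1 →
    f x ^ l * f y ^ (1 - l) ≤ f (l • x + (1 - l) • y)

open scoped ENNReal

/-- One-dimensional Brunn–Minkowski inequality, in midpoint form. -/
theorem volume_add_volume_le_of_midpoint_mem {A B C : Set ℝ} (hA : MeasurableSet A)
    (hB : MeasurableSet B) (hAne : A.Nonempty) (hBne : B.Nonempty)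
    (hC : ∀ x ∈ A, ∀ y ∈ B, (2 : ℝ)⁻¹ • (x + y) ∈ C) :
    volume A + volume B ≤ 2 * volume C := by
  have key : ∀ K ⊆ A, IsCompact K → ∀ L ⊆ B, IsCompact L → K.Nonempty → L.Nonempty →
      volume K + volume L ≤ 2 * volume C := by
    intro K hKA hK L hLB hL hKne hLne
    obtain ⟨k, hk, hkmax⟩ := hK.exists_isGreatest hKne
    obtain ⟨l, hl, hlmin⟩ := hL.exists_isLeast hLne
    have vol (c : ℝ) (S : Set ℝ) : volume ((2 * ·) ⁻¹' ((· + (-c)) ⁻¹' S)) = 2⁻¹ * volume S := by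
      rw [Real.volume_preimage_mul_left (by norm_num), measure_preimage_add_right]
      congr 1
      rw [abs_of_pos (by norm_num), ENNReal.ofReal_inv_of_pos (by norm_num)]
      simp
    have hsub : ((2 * ·) ⁻¹' ((· + (-l)) ⁻¹' K)) ∪ ((2 * ·) ⁻¹' ((· + (-k)) ⁻¹' L)) ⊆ C := by
      rintro z (hz | hz)
      · have := hC _ (hKA hz) _ (hLB hl)
        simpa using this
      · have := hC _ (hKA hk) _ (hLB hz)
        simpa using this
    have hdisj : AEDisjoint volume ((2 * ·) ⁻¹' ((· + (-l)) ⁻¹' K))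
        ((2 * ·) ⁻¹' ((· + (-k)) ⁻¹' L)) := by
      refine measure_mono_null (t := {(k + l) / 2}) ?_ Real.volume_singleton
      rintro z ⟨hz, hz'⟩
      have h1 := hkmax hz
      have h2 := hlmin hz'
      simp only [Set.mem_singleton_iff] at *
      linarith
    have hm : MeasurableSet ((2 * ·) ⁻¹' ((· + (-k)) ⁻¹' L)) :=
      (measurable_const_mul (2 : ℝ)) ((measurable_add_const (-k)) hL.measurableSet)
    have h := measure_mono (μ := volume) hsub
    rw [measure_union₀ hm.nullMeasurableSet hdisj, vol, vol, ← mul_add] at h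
    calc volume K + volume L = 2 * (2⁻¹ * (volume K + volume L)) := by
          rw [← mul_assoc, ENNReal.mul_inv_cancel (by simp) (by simp), one_mul]
      _ ≤ _ := by gcongr
  have exhaust {S : Set ℝ} (hS : MeasurableSet S) (hne : S.Nonempty) :
      volume S ≤ ⨆ K : {K : Set ℝ // K ⊆ S ∧ IsCompact K ∧ K.Nonempty}, volume K.1 := by
    obtain ⟨s, hs⟩ := hne
    rw [hS.measure_eq_iSup_isCompact]
    refine iSup₂_le fun K hK ↦ iSup_le fun hKc ↦ ?_
    exact (measure_mono (Set.subset_insert s K)).trans <| le_iSup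
      (fun K : {K : Set ℝ // K ⊆ S ∧ IsCompact K ∧ K.Nonempty} ↦ volume K.1)
      ⟨insert s K, Set.insert_subset hs hK, hKc.insert s, Set.insert_nonempty s K⟩
  have inst {S : Set ℝ} (hne : S.Nonempty) :
      Nonempty {K : Set ℝ // K ⊆ S ∧ IsCompact K ∧ K.Nonempty} :=
    hne.elim fun s hs ↦
      ⟨{s}, Set.singleton_subset_iff.2 hs, isCompact_singleton, Set.singleton_nonempty s⟩
  have := inst hAne
  have := inst hBne
  exact (add_le_add (exhaust hA hAne) (exhaust hB hBne)).trans <|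
    ENNReal.iSup_add_iSup_le fun K L ↦
      key K.1 K.2.1 K.2.2.1 L.1 L.2.1 L.2.2.1 K.2.2.2 L.2.2.2

theorem ENNReal.four_mul_mul_le_add_sq (a b : ℝ≥0∞) : 4 * (a * b) ≤ (a + b) ^ 2 := by
  induction a with
  | top => simp
  | coe a =>
  induction b with
  | top => simp
  | coe b =>
    norm_cast
    have : (4 : ℝ) * (a * b) ≤ (a + b) ^ 2 := by nlinarith [sq_nonneg ((a : ℝ) - b)]
    exact_mod_cast this

/-- Layer-cake formula for functions bounded by one. -/
theorem lintegral_eq_setLIntegral_Ioo_measure_lt {α : Type*} [MeasurableSpace α] (μ : Measure α)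
    {u : α → ℝ≥0∞} (hu : Measurable u) (hu1 : ∀ x, u x ≤ 1) :
    ∫⁻ x, u x ∂μ = ∫⁻ t in Set.Ioo (0 : ℝ) 1, μ {x | ENNReal.ofReal t < u x} := by
  have h (x) : u x ≠ ∞ := ne_top_of_le_ne_top ENNReal.one_ne_top (hu1 x)
  calc ∫⁻ x, u x ∂μ = ∫⁻ x, ENNReal.ofReal (u x).toReal ∂μ := by simp [h]
    _ = ∫⁻ t in Set.Ioi (0 : ℝ), μ {x | ENNReal.ofReal t < u x} := by
      rw [lintegral_eq_lintegral_meas_lt μ (.of_forall fun _ ↦ ENNReal.toReal_nonneg)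
        hu.ennreal_toReal.aemeasurable]
      refine setLIntegral_congr_fun measurableSet_Ioi fun t ht ↦ ?_
      simp only [ENNReal.ofReal_lt_iff_lt_toReal (le_of_lt ht) (h _)]
    _ = _ := by
      rw [← lintegral_inter_add_sdiff _ (Set.Ioi 0) (measurableSet_Iio (a := (1 : ℝ))),
        Set.Ioi_inter_Iio, setLIntegral_eq_zero (measurableSet_Ioi.diff measurableSet_Iio),
        add_zero]
      rintro t ⟨-, ht⟩
      have h1 : 1 ≤ t := not_lt.1 ht
      have hempty : {x | ENNReal.ofReal t < u x} = ∅ :=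
        Set.eq_empty_of_forall_notMem fun x hx ↦
          hx.not_ge ((hu1 x).trans (ENNReal.one_le_ofReal.2 h1))
      simp [hempty]

/-- One-dimensional Prékopa–Leindler inequality for functions with supremum one. -/
theorem lintegral_add_lintegral_le_of_midpoint {u v w : ℝ → ℝ≥0∞} (hu : Measurable u)
    (hv : Measurable v) (hw : Measurable w) (hu1 : ∀ x, u x ≤ 1) (hv1 : ∀ x, v x ≤ 1)
    (hu_sup : ∀ t < 1, ∃ x, t < u x) (hv_sup : ∀ t < 1, ∃ x, t < v x)
    (h : ∀ x y, u x * v y ≤ w ((2 : ℝ)⁻¹ • (x + y)) ^ 2) :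
    (∫⁻ x, u x) + ∫⁻ x, v x ≤ 2 * ∫⁻ x, w x := by
  have hw' : Measurable fun x ↦ min (w x) 1 := hw.min measurable_const
  calc (∫⁻ x, u x) + ∫⁻ x, v x ≤ 2 * ∫⁻ x, min (w x) 1 := by
        rw [lintegral_eq_setLIntegral_Ioo_measure_lt _ hu hu1,
          lintegral_eq_setLIntegral_Ioo_measure_lt _ hv hv1,
          lintegral_eq_setLIntegral_Ioo_measure_lt _ hw' fun _ ↦ min_le_right _ _,
          ← lintegral_const_mul' _ _ ENNReal.ofNat_ne_top]
        refine (le_lintegral_add _ _).trans (setLIntegral_mono' measurableSet_Ioo fun t ht ↦ ?_)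
        have ht1 : ENNReal.ofReal t < 1 := by simpa using ht.2
        refine volume_add_volume_le_of_midpoint_mem (measurableSet_lt measurable_const hu)
          (measurableSet_lt measurable_const hv) (hu_sup _ ht1) (hv_sup _ ht1) fun x hx y hy ↦ ?_
        refine lt_min (lt_of_not_ge fun hle ↦ ?_) ht1
        refine ((ENNReal.mul_lt_mul hx hy).trans_le (h x y)).not_ge ?_
        rw [← sq]
        gcongr
    _ ≤ _ := by
        gcongr
        exact min_le_left _ _

/-- The midpoint Prékopa–Leindler inequality holds for the measure `μ`. -/
def PrekopaLeindler {E : Type*} [AddCommMonoid E] [Module ℝ E] [MeasurableSpace E]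
    (μ : Measure E) : Prop :=
  ∀ f g h : E → ℝ≥0∞, Measurable f → Measurable g → Measurable h →
    (∀ x y, f x * g y ≤ h ((2 : ℝ)⁻¹ • (x + y)) ^ 2) →
    (∫⁻ x, f x ∂μ) * (∫⁻ x, g x ∂μ) ≤ (∫⁻ x, h x ∂μ) ^ 2

theorem lintegral_mul_lintegral_le_of_bounded {f g h : ℝ → ℝ≥0∞} (hf : Measurable f)
    (hg : Measurable g) (hh : Measurable h) (hf_top : ⨆ x, f x ≠ ∞) (hg_top : ⨆ x, g x ≠ ∞)
    (H : ∀ x y, f x * g y ≤ h ((2 : ℝ)⁻¹ • (x + y)) ^ 2) :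
    (∫⁻ x, f x) * (∫⁻ x, g x) ≤ (∫⁻ x, h x) ^ 2 := by
  set F := ⨆ x, f x
  set G := ⨆ x, g x
  rcases eq_or_ne F 0 with hF0 | hF0
  · simp [ENNReal.iSup_eq_zero.1 hF0]
  rcases eq_or_ne G 0 with hG0 | hG0
  · simp [ENNReal.iSup_eq_zero.1 hG0]
  obtain ⟨c, hc⟩ : ∃ c : ℝ≥0∞, c ^ 2 = F * G :=
    ⟨(F * G) ^ (2⁻¹ : ℝ), by rw [← ENNReal.rpow_natCast, ← ENNReal.rpow_mul]; simp⟩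
  have hc0 : c ≠ 0 := by
    rintro rfl
    simp [hF0, hG0] at hc
  have hc_top : c ≠ ∞ := by
    rintro rfl
    exact ENNReal.mul_ne_top hf_top hg_top (by simpa using hc.symm)
  have le_one {k : ℝ → ℝ≥0∞} (x : ℝ) : k x / ⨆ x, k x ≤ 1 :=
    ENNReal.div_le_of_le_mul (by simpa using le_iSup k x)
  have sup_one {k : ℝ → ℝ≥0∞} (h0 : ⨆ x, k x ≠ 0) (h_top : ⨆ x, k x ≠ ∞) (t : ℝ≥0∞)
      (ht : t < 1) : ∃ x, t < k x / ⨆ x, k x := by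
    have : t * ⨆ x, k x < ⨆ x, k x := by
      simpa using ENNReal.mul_lt_mul_left h0 h_top ht
    obtain ⟨x, hx⟩ := lt_iSup_iff.1 this
    exact ⟨x, (ENNReal.lt_div_iff_mul_lt (.inl h0) (.inl h_top)).2 hx⟩
  have key := lintegral_add_lintegral_le_of_midpoint (hf.div_const F) (hg.div_const G)
    (hh.div_const c) le_one le_one (sup_one hF0 hf_top) (sup_one hG0 hg_top) fun x y ↦ by
      calc f x / F * (g y / G) = f x * g y / c ^ 2 := by
            rw [hc, ENNReal.mul_div_mul_comm (.inl hF0) (.inl hf_top)]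
        _ ≤ h ((2 : ℝ)⁻¹ • (x + y)) ^ 2 / c ^ 2 := ENNReal.div_le_div_right (H x y) _
        _ = (h ((2 : ℝ)⁻¹ • (x + y)) / c) ^ 2 := by
            rw [sq, sq c, ENNReal.mul_div_mul_comm (.inl hc0) (.inl hc_top), sq]
  have rescale (k : ℝ → ℝ≥0∞) {d : ℝ≥0∞} (h0 : d ≠ 0) (h_top : d ≠ ∞) :
      ∫⁻ x, k x = d * ∫⁻ x, k x / d := by
    rw [← lintegral_const_mul' _ _ h_top]
    simp only [ENNReal.mul_div_cancel h0 h_top]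
  have hquarter : (∫⁻ x, f x / F) * (∫⁻ x, g x / G) ≤ (∫⁻ x, h x / c) ^ 2 := by
    refine (ENNReal.mul_le_mul_iff_right (a := 4) (by simp) (by simp)).1 ?_
    calc _ ≤ ((∫⁻ x, f x / F) + ∫⁻ x, g x / G) ^ 2 := ENNReal.four_mul_mul_le_add_sq _ _
      _ ≤ (2 * ∫⁻ x, h x / c) ^ 2 := by gcongr
      _ = _ := by ring
  rw [rescale f hF0 hf_top, rescale g hG0 hg_top, rescale h hc0 hc_top, mul_pow, hc,
    mul_mul_mul_comm]
  gcongr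

theorem prekopaLeindler_real : PrekopaLeindler (volume : Measure ℝ) := by
  intro f g h hf hg hh H
  have trunc {k : ℝ → ℝ≥0∞} (hk : Measurable k) :
      ∫⁻ x, k x = ⨆ N : ℕ, ∫⁻ x, min (k x) N := by
    rw [← lintegral_iSup (fun N ↦ hk.min measurable_const)
      fun M N hMN x ↦ min_le_min le_rfl (by exact_mod_cast hMN)]
    congr with x
    rw [← inf_iSup_eq, ENNReal.iSup_natCast, inf_top_eq]
  have bdd (k : ℝ → ℝ≥0∞) (N : ℕ) : ⨆ x, min (k x) N ≠ ∞ :=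
    ne_top_of_le_ne_top (ENNReal.natCast_ne_top N) (iSup_le fun _ ↦ min_le_right _ _)
  rw [trunc hf, trunc hg, ENNReal.iSup_mul]
  refine iSup_le fun M ↦ ?_
  rw [ENNReal.mul_iSup]
  refine iSup_le fun N ↦ ?_
  exact lintegral_mul_lintegral_le_of_bounded (hf.min measurable_const) (hg.min measurable_const)
    hh (bdd f M) (bdd g N) fun x y ↦
      (mul_le_mul' (min_le_left _ _) (min_le_left _ _)).trans (H x y)

theorem PrekopaLeindler.prod {E F : Type*} [AddCommMonoid E] [Module ℝ E] [MeasurableSpace E]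
    [AddCommMonoid F] [Module ℝ F] [MeasurableSpace F] {μ : Measure E} {ν : Measure F}
    [SFinite ν] (hμ : PrekopaLeindler μ) (hν : PrekopaLeindler ν) :
    PrekopaLeindler (μ.prod ν) := by
  intro f g h hf hg hh H
  rw [lintegral_prod _ hf.aemeasurable, lintegral_prod _ hg.aemeasurable,
    lintegral_prod _ hh.aemeasurable]
  refine hμ _ _ _ hf.lintegral_prod_right' hg.lintegral_prod_right' hh.lintegral_prod_right'
    fun x y ↦ ?_
  exact hν _ _ _ (by fun_prop) (by fun_prop) (by fun_prop) fun x' y' ↦ H (x, x') (y, y')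

/-- The midpoint Prékopa–Leindler inequality transfers along measure-preserving linear maps. -/
theorem PrekopaLeindler.of_measurePreserving {E F : Type*} [AddCommMonoid E] [Module ℝ E]
    [MeasurableSpace E] [AddCommMonoid F] [Module ℝ F] [MeasurableSpace F] {μ : Measure E}
    {ν : Measure F} (hμ : PrekopaLeindler μ) (e : E →ₗ[ℝ] F) (he : MeasurePreserving e μ ν) :
    PrekopaLeindler ν := by
  intro f g h hf hg hh H
  rw [← he.lintegral_comp hf, ← he.lintegral_comp hg, ← he.lintegral_comp hh]
  refine hμ _ _ _ (hf.comp he.measurable) (hg.comp he.measurable) (hh.comp he.measurable)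
    fun x y ↦ ?_
  simpa using H (e x) (e y)

theorem prekopaLeindler_pi (n : ℕ) : PrekopaLeindler (volume : Measure (Fin n → ℝ)) := by
  induction n with
  | zero =>
    intro f g h _ _ _ H
    have hvol : (volume : Measure (Fin 0 → ℝ)) Set.univ = 1 := by
      simp [volume_pi]
    simp only [lintegral_unique, hvol, mul_one]
    exact (H _ _).trans_eq (congrArg (h · ^ 2) (Subsingleton.elim _ _))
  | succ n ih =>
    refine (prekopaLeindler_real.prod ih).of_measurePreserving
      (Fin.consLinearEquiv ℝ fun _ ↦ ℝ).toLinearMap ?_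
    convert! (volume_preserving_piFinSuccAbove (fun _ : Fin (n + 1) ↦ ℝ) 0).symm using 1
    ext p i
    simp [MeasurableEquiv.piFinSuccAbove, Fin.consLinearEquiv]

theorem prekopaLeindler_euclideanSpace (n : ℕ) :
    PrekopaLeindler (volume : Measure (EuclideanSpace ℝ (Fin n))) :=
  (prekopaLeindler_pi n).of_measurePreserving
    (WithLp.linearEquiv 2 ℝ (Fin n → ℝ)).symm.toLinearMap (PiLp.volume_preserving_toLp (Fin n))

/-- The quadratic estimate behind the variance bound. -/
theorem norm_sq_midpoint_le {E : Type*} [NormedAddCommGroup E] [InnerProductSpace ℝ E] {x y : E}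
    {R α : ℝ} (hα : 0 ≤ α) (hx : ‖x‖ ≤ R) (hy : ‖y‖ ≤ R) :
    2 * ‖(2 : ℝ)⁻¹ • (x + y)‖ ^ 2 ≤
      (1 + α) * ‖x‖ ^ 2 + (1 - α) * ‖y‖ ^ 2 + 2 * α ^ 2 * R ^ 2 := by
  have hpar := parallelogram_law_with_norm ℝ x y
  have hinner : inner ℝ (x + y) (y - x) = ‖y‖ ^ 2 - ‖x‖ ^ 2 := by
    simp only [inner_add_left, inner_sub_right, real_inner_self_eq_norm_sq, real_inner_comm x y]
    ring
  have hcs := real_inner_le_norm (x + y) (y - x)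
  rw [hinner, norm_sub_rev] at hcs
  have hs : ‖x + y‖ ≤ 2 * R := (norm_add_le x y).trans (by linarith)
  have hs2 : ‖x + y‖ ^ 2 ≤ (2 * R) ^ 2 := pow_le_pow_left₀ (norm_nonneg _) hs 2
  rw [norm_smul, mul_pow, Real.norm_of_nonneg (by norm_num)]
  nlinarith [sq_nonneg (α * ‖x + y‖ - ‖x - y‖), mul_le_mul_of_nonneg_left hcs hα,
    mul_le_mul_of_nonneg_left hs2 (sq_nonneg α)]

theorem LogConcaveFn.mul_le_sq {E : Type*} [AddCommMonoid E] [Module ℝ E] {f : E → ℝ}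
    (hf : LogConcaveFn f) (hf0 : ∀ x, 0 ≤ f x) (x y : E) :
    f x * f y ≤ f ((2 : ℝ)⁻¹ • (x + y)) ^ 2 := by
  have h := hf x y 2⁻¹ (by norm_num) (by norm_num)
  rw [show (1 : ℝ) - 2⁻¹ = 2⁻¹ by norm_num, ← smul_add,
    ← Real.mul_rpow (hf0 x) (hf0 y)] at h
  have hxy := mul_nonneg (hf0 x) (hf0 y)
  calc f x * f y = ((f x * f y) ^ (2⁻¹ : ℝ)) ^ 2 := by
        rw [← Real.rpow_natCast, ← Real.rpow_mul hxy]; simp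
    _ ≤ _ := pow_le_pow_left₀ (Real.rpow_nonneg hxy _) h 2

/-- Variance bound for logconcave functions: for `f` logconcave supported on a
compact subset of `R₁·B_n`, `0 < α ≤ 1/2`, and
`G(s) = ∫ f(x) e^{-‖x‖²/(2s)} dx`,
`G(σ²/(1+α))·G(σ²/(1-α)) ≤ exp(2R₁²α²/σ²)·G(σ²)²`. -/
theorem logconcave_variance_bound
    (n : ℕ) (hn : 1 ≤ n) (R₁ σ α : ℝ) (hR : 0 < R₁) (hσ : 0 < σ)
    (hα0 : 0 < α) (hα : α ≤ 1 / 2)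
    (f : EuclideanSpace ℝ (Fin n) → ℝ) (hf0 : ∀ x, 0 ≤ f x) (hfm : Measurable f)
    (hflc : LogConcaveFn f) (hfc : HasCompactSupport f)
    (hfsupp : Function.support f ⊆ Metric.closedBall 0 R₁) :
    (∫ x, f x * Real.exp (-‖x‖ ^ 2 / (2 * (σ ^ 2 / (1 + α))))) *
      (∫ x, f x * Real.exp (-‖x‖ ^ 2 / (2 * (σ ^ 2 / (1 - α))))) ≤
    Real.exp (2 * R₁ ^ 2 * α ^ 2 / σ ^ 2) *
      (∫ x, f x * Real.exp (-‖x‖ ^ 2 / (2 * σ ^ 2))) ^ 2 := by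
  set K := Real.exp (R₁ ^ 2 * α ^ 2 / σ ^ 2) with hK
  set a := fun x ↦ f x * Real.exp (-‖x‖ ^ 2 / (2 * (σ ^ 2 / (1 + α)))) with ha
  set b := fun x ↦ f x * Real.exp (-‖x‖ ^ 2 / (2 * (σ ^ 2 / (1 - α)))) with hb
  set c := fun x ↦ f x * Real.exp (-‖x‖ ^ 2 / (2 * σ ^ 2)) with hc
  have ha0 (x) : 0 ≤ a x := mul_nonneg (hf0 x) (Real.exp_nonneg _)
  have hb0 (x) : 0 ≤ b x := mul_nonneg (hf0 x) (Real.exp_nonneg _)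
  have hc0 (x) : 0 ≤ c x := mul_nonneg (hf0 x) (Real.exp_nonneg _)
  have ham : Measurable a := by fun_prop
  have hbm : Measurable b := by fun_prop
  have hcm : Measurable c := by fun_prop
  have hKc : Real.exp (2 * R₁ ^ 2 * α ^ 2 / σ ^ 2) * (∫ x, c x) ^ 2 = (∫ x, K * c x) ^ 2 := by
    rw [integral_const_mul, mul_pow, hK, ← Real.exp_nat_mul]
    congr 2
    push_cast
    ring
  have hrhs : 0 ≤ Real.exp (2 * R₁ ^ 2 * α ^ 2 / σ ^ 2) * (∫ x, c x) ^ 2 := by positivity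
  by_cases hai : Integrable a
  swap
  · simpa [integral_undef hai] using hrhs
  by_cases hbi : Integrable b
  swap
  · simpa [integral_undef hbi] using hrhs
  have hball {x} (hx : f x ≠ 0) : ‖x‖ ≤ R₁ := by simpa using hfsupp hx
  have hα1 : 0 < 1 - α := by linarith
  have hci : Integrable c := by
    refine (hai.const_mul (Real.exp (α * R₁ ^ 2 / (2 * σ ^ 2)))).mono' hcm.aestronglyMeasurable
      (.of_forall fun x ↦ ?_)
    rw [Real.norm_of_nonneg (hc0 x)]
    by_cases hx : f x = 0
    · simp [ha, hc, hx]
    have hxR := pow_le_pow_left₀ (norm_nonneg x) (hball hx) 2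
    simp only [ha, hc]
    rw [mul_left_comm, ← Real.exp_add]
    refine mul_le_mul_of_nonneg_left (Real.exp_le_exp.2 ?_) (hf0 x)
    rw [← sub_nonneg]
    have : α * R₁ ^ 2 / (2 * σ ^ 2) + -‖x‖ ^ 2 / (2 * (σ ^ 2 / (1 + α))) - -‖x‖ ^ 2 / (2 * σ ^ 2)
        = α * (R₁ ^ 2 - ‖x‖ ^ 2) / (2 * σ ^ 2) := by
      field_simp
      ring
    rw [this]
    exact div_nonneg (mul_nonneg hα0.le (sub_nonneg.2 hxR)) (by positivity)
  have hpoint (x y) : a x * b y ≤ (K * c ((2 : ℝ)⁻¹ • (x + y))) ^ 2 := by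
    by_cases hx : f x = 0
    · simpa [ha, hx] using sq_nonneg _
    by_cases hy : f y = 0
    · simpa [hb, hy] using sq_nonneg _
    have hz := norm_sq_midpoint_le hα0.le (hball hx) (hball hy)
    set z := (2 : ℝ)⁻¹ • (x + y)
    have hexp : -‖x‖ ^ 2 / (2 * (σ ^ 2 / (1 + α))) + -‖y‖ ^ 2 / (2 * (σ ^ 2 / (1 - α))) ≤
        2 * (R₁ ^ 2 * α ^ 2 / σ ^ 2 + -‖z‖ ^ 2 / (2 * σ ^ 2)) := by
      rw [← sub_nonneg]
      have : 2 * (R₁ ^ 2 * α ^ 2 / σ ^ 2 + -‖z‖ ^ 2 / (2 * σ ^ 2)) -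
          (-‖x‖ ^ 2 / (2 * (σ ^ 2 / (1 + α))) + -‖y‖ ^ 2 / (2 * (σ ^ 2 / (1 - α)))) =
          ((1 + α) * ‖x‖ ^ 2 + (1 - α) * ‖y‖ ^ 2 + 4 * α ^ 2 * R₁ ^ 2 - 2 * ‖z‖ ^ 2) /
            (2 * σ ^ 2) := by
        field_simp
        ring
      rw [this]
      exact div_nonneg (by nlinarith [sq_nonneg (α * R₁)]) (by positivity)
    calc a x * b y = (f x * f y) * Real.exp (-‖x‖ ^ 2 / (2 * (σ ^ 2 / (1 + α))) +
          -‖y‖ ^ 2 / (2 * (σ ^ 2 / (1 - α)))) := by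
          rw [Real.exp_add]; ring
      _ ≤ f z ^ 2 * Real.exp (2 * (R₁ ^ 2 * α ^ 2 / σ ^ 2 + -‖z‖ ^ 2 / (2 * σ ^ 2))) :=
          mul_le_mul (hflc.mul_le_sq hf0 x y) (Real.exp_le_exp.2 hexp) (Real.exp_nonneg _)
            (sq_nonneg _)
      _ = (K * c z) ^ 2 := by
          rw [two_mul, Real.exp_add, Real.exp_add]; ring
  have hKc0 (x) : 0 ≤ K * c x := mul_nonneg (Real.exp_nonneg _) (hc0 x)
  have hPL := prekopaLeindler_euclideanSpace n (fun x ↦ ENNReal.ofReal (a x))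
    (fun x ↦ ENNReal.ofReal (b x)) (fun x ↦ ENNReal.ofReal (K * c x)) (by fun_prop) (by fun_prop)
    (by fun_prop) fun x y ↦ by
      rw [← ENNReal.ofReal_mul (ha0 x), ← ENNReal.ofReal_pow (hKc0 _)]
      exact ENNReal.ofReal_le_ofReal (hpoint x y)
  rw [← ofReal_integral_eq_lintegral_ofReal hai (.of_forall ha0),
    ← ofReal_integral_eq_lintegral_ofReal hbi (.of_forall hb0),
    ← ofReal_integral_eq_lintegral_ofReal (hci.const_mul K) (.of_forall hKc0),
    ← ENNReal.ofReal_mul (integral_nonneg ha0), ← ENNReal.ofReal_pow (integral_nonneg hKc0),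
    ENNReal.ofReal_le_ofReal_iff (sq_nonneg _)] at hPL
  rw [hKc]
  exact hPL
end

section
/- Let n ≥ 3, let K ⊆ ℝⁿ be a convex body, and σ > 0. With α = 1/n, (∫_K e^{−(1−α)‖x‖²/(2σ²)} dx) · (∫_K e^{−(1+α)‖x‖²/(2σ²)} dx) ≤ (1 + 2/n) · (∫_K e^{−‖x‖²/(2σ²)} dx)². Equivalently, if X is drawn from the Gaussian of variance σ_i² restricted to K, σ_{i+1}² = σ_i²(1+1/n), and Y = exp(−‖X‖²/(2σ_{i+1}²))/exp(−‖X‖²/(2σ_i²)), then E(Y²)/E(Y)² < 1 + 2/n. -/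
open MeasureTheory
open scoped ENNReal

/-- One-dimensional Brunn–Minkowski inequality for compact sets. -/
theorem volume_add_le_of_isCompact {A B : Set ℝ} (hA : IsCompact A) (hB : IsCompact B)
    (hA' : A.Nonempty) (hB' : B.Nonempty) {C : Set ℝ}
    (hC : ∀ a ∈ A, ∀ b ∈ B, a + b ∈ C) :
    volume A + volume B ≤ volume C := by
  obtain ⟨a, haA, ha⟩ := hA.exists_isGreatest hA'
  obtain ⟨b, hbB, hb⟩ := hB.exists_isLeast hB'
  have hAB : volume ((fun x => x + -b) ⁻¹' A) + volume ((fun x => x + -a) ⁻¹' B) =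
      volume A + volume B := by
    rw [measure_preimage_add_right, measure_preimage_add_right]
  have hmB : MeasurableSet ((fun x => x + -a) ⁻¹' B) :=
    (measurable_add_const _) hB.measurableSet
  have hdisj : AEDisjoint volume ((fun x => x + -b) ⁻¹' A) ((fun x => x + -a) ⁻¹' B) := by
    refine measure_mono_null (t := {a + b}) ?_ (by simp)
    rintro x ⟨hx, hx'⟩
    have h₁ : x + -b ≤ a := ha hx
    have h₂ : b ≤ x + -a := hb hx'
    simp only [Set.mem_singleton_iff]
    linarith
  rw [← hAB, ← measure_union₀ hmB.nullMeasurableSet hdisj]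
  refine measure_mono ?_
  rintro x (hx | hx)
  · simpa using hC _ hx b hbB
  · simpa using hC a haA _ hx

/-- One-dimensional Brunn–Minkowski inequality for measurable sets. -/
theorem volume_add_le_of_measurableSet {A B : Set ℝ} (hA : MeasurableSet A)
    (hB : MeasurableSet B) (hA' : A.Nonempty) (hB' : B.Nonempty) {C : Set ℝ}
    (hC : ∀ a ∈ A, ∀ b ∈ B, a + b ∈ C) :
    volume A + volume B ≤ volume C := by
  obtain ⟨a, ha⟩ := hA'
  obtain ⟨b, hb⟩ := hB'
  have key : ∀ K ⊆ A, IsCompact K → ∀ L ⊆ B, IsCompact L →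
      volume K + volume L ≤ volume C := by
    intro K hKA hK L hLB hL
    calc volume K + volume L ≤ volume (insert a K) + volume (insert b L) := by
          gcongr <;> exact Set.subset_insert _ _
      _ ≤ volume C := by
          refine volume_add_le_of_isCompact (hK.insert a) (hL.insert b) (by simp) (by simp) ?_
          intro x hx y hy
          exact hC x (Set.insert_subset ha hKA hx) y (Set.insert_subset hb hLB hy)
  rw [hA.measure_eq_iSup_isCompact, hB.measure_eq_iSup_isCompact]
  simp only [iSup_and']
  exact ENNReal.biSup_add_biSup_le' ⟨∅, by simp⟩ ⟨∅, by simp⟩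
    fun K hK L hL => key K hK.1 hK.2 L hL.1 hL.2

theorem lintegral_eq_lintegral_Ioi_volume_lt {f : ℝ → ℝ≥0∞} (hf : Measurable f)
    (hf' : ∀ x, f x ≠ ∞) :
    ∫⁻ x, f x = ∫⁻ t in Set.Ioi (0 : ℝ), volume {x | ENNReal.ofReal t < f x} := by
  have h := lintegral_eq_lintegral_meas_lt (f := fun x => (f x).toReal) volume
    (Filter.Eventually.of_forall fun _ => ENNReal.toReal_nonneg)
    hf.ennreal_toReal.aemeasurable
  simp only [ENNReal.ofReal_toReal (hf' _)] at h
  rw [h]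
  refine setLIntegral_congr_fun measurableSet_Ioi fun t ht => ?_
  congr 1
  ext x
  exact (ENNReal.ofReal_lt_iff_lt_toReal (le_of_lt ht) (hf' x)).symm

theorem lintegral_add_lintegral_le_of_iSup_eq_one {f g h : ℝ → ℝ≥0∞} (hf : Measurable f)
    (hg : Measurable g) (hh : Measurable h) (hf1 : ⨆ x, f x = 1) (hg1 : ⨆ x, g x = 1)
    (hfgh : ∀ x y, f x * g y ≤ h (x + y) ^ 2) :
    (∫⁻ x, f x) + ∫⁻ x, g x ≤ ∫⁻ x, h x := by
  have hfle : ∀ x, f x ≤ 1 := fun x => hf1 ▸ le_iSup f x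
  have hgle : ∀ x, g x ≤ 1 := fun x => hg1 ▸ le_iSup g x
  refine le_trans ?_ (lintegral_mono fun x => min_le_left (h x) 1)
  rw [lintegral_eq_lintegral_Ioi_volume_lt hf fun x => ((hfle x).trans_lt (by simp)).ne,
    lintegral_eq_lintegral_Ioi_volume_lt hg fun x => ((hgle x).trans_lt (by simp)).ne,
    lintegral_eq_lintegral_Ioi_volume_lt (hh.min measurable_const)
      fun x => ((min_le_right (h x) 1).trans_lt (by simp)).ne]
  refine (le_lintegral_add _ _).trans (setLIntegral_mono' measurableSet_Ioi fun t _ => ?_)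
  rcases lt_or_ge (ENNReal.ofReal t) 1 with ht | ht
  · refine volume_add_le_of_measurableSet (measurableSet_lt measurable_const hf)
      (measurableSet_lt measurable_const hg) (lt_iSup_iff.1 (ht.trans_eq hf1.symm) :)
      (lt_iSup_iff.1 (ht.trans_eq hg1.symm) :) ?_
    intro x hx y hy
    refine lt_min ?_ ht
    by_contra! hle
    have h₁ : ENNReal.ofReal t * ENNReal.ofReal t < f x * g y := ENNReal.mul_lt_mul hx hy
    have h₂ : h (x + y) ^ 2 ≤ ENNReal.ofReal t ^ 2 := by gcongr
    exact absurd ((hfgh x y).trans h₂) (by rw [sq]; exact not_le.2 h₁)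
  · have h₁ : {x | ENNReal.ofReal t < f x} = ∅ := by
      ext x; simpa using (hfle x).trans ht
    have h₂ : {x | ENNReal.ofReal t < g x} = ∅ := by
      ext x; simpa using (hgle x).trans ht
    simp [h₁, h₂]

theorem four_mul_lintegral_mul_le_of_iSup_ne_top {f g h : ℝ → ℝ≥0∞} (hf : Measurable f)
    (hg : Measurable g) (hh : Measurable h) (hf1 : ⨆ x, f x ≠ ∞) (hg1 : ⨆ x, g x ≠ ∞)
    (hfgh : ∀ x y, f x * g y ≤ h (x + y) ^ 2) :
    4 * ((∫⁻ x, f x) * ∫⁻ x, g x) ≤ (∫⁻ x, h x) ^ 2 := by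
  set F := ⨆ x, f x with hF
  set G := ⨆ x, g x with hG
  rcases eq_or_ne F 0 with hF0 | hF0
  · have : ∀ x, f x = 0 := ENNReal.iSup_eq_zero.1 hF0
    simp [this]
  rcases eq_or_ne G 0 with hG0 | hG0
  · have : ∀ x, g x = 0 := ENNReal.iSup_eq_zero.1 hG0
    simp [this]
  obtain ⟨s, hs⟩ : ∃ s : ℝ≥0∞, s ^ 2 = F⁻¹ * G⁻¹ :=
    ⟨(F⁻¹ * G⁻¹) ^ (1 / 2 : ℝ), by rw [← ENNReal.rpow_natCast, ← ENNReal.rpow_mul]; simp⟩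
  have key := lintegral_add_lintegral_le_of_iSup_eq_one (hf.const_mul F⁻¹) (hg.const_mul G⁻¹)
    (hh.const_mul s) (by rw [← ENNReal.mul_iSup, ← hF, ENNReal.inv_mul_cancel hF0 hf1])
    (by rw [← ENNReal.mul_iSup, ← hG, ENNReal.inv_mul_cancel hG0 hg1])
    (fun x y => by
      rw [mul_pow, hs, mul_mul_mul_comm]
      gcongr
      exact hfgh x y)
  rw [lintegral_const_mul _ hf, lintegral_const_mul _ hg, lintegral_const_mul _ hh] at key
  have h₂ := (ENNReal.four_mul_mul_le_add_sq _ _).trans (pow_le_pow_left' key 2)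
  rw [mul_mul_mul_comm, mul_left_comm, mul_pow, hs] at h₂
  refine (ENNReal.mul_le_mul_iff_right ?_ ?_).1 h₂
  · simp [hf1, hg1]
  · exact ENNReal.mul_ne_top (by simpa using hF0) (by simpa using hG0)

theorem lintegral_eq_iSup_lintegral_min_natCast {f : ℝ → ℝ≥0∞} (hf : Measurable f) :
    ∫⁻ x, f x = ⨆ N : ℕ, ∫⁻ x, min (f x) N := by
  rw [← lintegral_iSup (fun N => hf.min measurable_const)]
  · refine lintegral_congr fun x => ?_
    rw [← inf_iSup_eq, ENNReal.iSup_natCast, inf_top_eq]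
  · intro M N hMN x
    dsimp only
    gcongr

/-- Midpoint Prékopa–Leindler inequality on the real line. -/
theorem four_mul_lintegral_mul_le {f g h : ℝ → ℝ≥0∞} (hf : Measurable f)
    (hg : Measurable g) (hh : Measurable h)
    (hfgh : ∀ x y, f x * g y ≤ h (x + y) ^ 2) :
    4 * ((∫⁻ x, f x) * ∫⁻ x, g x) ≤ (∫⁻ x, h x) ^ 2 := by
  rw [lintegral_eq_iSup_lintegral_min_natCast hf, lintegral_eq_iSup_lintegral_min_natCast hg,
    ENNReal.iSup_mul, ENNReal.mul_iSup]
  refine iSup_le fun M => ?_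
  rw [ENNReal.mul_iSup, ENNReal.mul_iSup]
  refine iSup_le fun N => ?_
  refine four_mul_lintegral_mul_le_of_iSup_ne_top (hf.min measurable_const)
    (hg.min measurable_const) hh ?_ ?_ fun x y => ?_
  · exact ((iSup_le fun x => min_le_right _ _).trans_lt (ENNReal.natCast_lt_top M)).ne
  · exact ((iSup_le fun x => min_le_right _ _).trans_lt (ENNReal.natCast_lt_top N)).ne
  · exact (mul_le_mul' (min_le_left _ _) (min_le_left _ _)).trans (hfgh x y)

theorem lintegral_fin_succ {n : ℕ} {f : (Fin (n + 1) → ℝ) → ℝ≥0∞} (hf : Measurable f) :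
    ∫⁻ x, f x = ∫⁻ t : ℝ, ∫⁻ x : Fin n → ℝ, f (Fin.cons t x) := by
  have e := (volume_preserving_piFinSuccAbove (fun _ : Fin (n + 1) => ℝ) 0).symm
  rw [← e.lintegral_comp hf, Measure.volume_eq_prod, lintegral_prod]
  · simp [MeasurableEquiv.piFinSuccAbove, Fin.insertNthEquiv]
  · exact (hf.comp (MeasurableEquiv.measurable _)).aemeasurable

theorem measurable_comp_fin_cons {n : ℕ} {f : (Fin (n + 1) → ℝ) → ℝ≥0∞} (hf : Measurable f) :
    Measurable fun p : ℝ × (Fin n → ℝ) => f (Fin.cons p.1 p.2) := by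
  simpa [Function.comp_def, MeasurableEquiv.piFinSuccAbove, Fin.insertNthEquiv] using
    hf.comp (MeasurableEquiv.piFinSuccAbove (fun _ : Fin (n + 1) => ℝ) 0).symm.measurable

/-- Midpoint Prékopa–Leindler inequality on `ℝⁿ`. -/
theorem four_pow_mul_lintegral_mul_le {n : ℕ} {f g h : (Fin n → ℝ) → ℝ≥0∞} (hf : Measurable f)
    (hg : Measurable g) (hh : Measurable h)
    (hfgh : ∀ x y, f x * g y ≤ h (x + y) ^ 2) :
    4 ^ n * ((∫⁻ x, f x) * ∫⁻ x, g x) ≤ (∫⁻ x, h x) ^ 2 := by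
  induction n with
  | zero =>
    simp only [lintegral_unique, volume_pi, Measure.pi_empty_univ, pow_zero, one_mul, mul_one]
    exact (hfgh _ _).trans_eq (congrArg (h · ^ 2) (Subsingleton.elim _ _))
  | succ n ih =>
    rw [lintegral_fin_succ hf, lintegral_fin_succ hg, lintegral_fin_succ hh]
    have hf' := measurable_comp_fin_cons hf
    have hg' := measurable_comp_fin_cons hg
    have hh' := measurable_comp_fin_cons hh
    have key := four_mul_lintegral_mul_le (hf'.lintegral_prod_right'.const_mul (4 ^ n))
      hg'.lintegral_prod_right' hh'.lintegral_prod_right' fun s t => by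
        rw [mul_assoc]
        refine ih (hf'.comp measurable_prodMk_left) (hg'.comp measurable_prodMk_left)
          (hh'.comp measurable_prodMk_left) fun x y => ?_
        have hcons : (Fin.cons (s + t) (x + y) : Fin (n + 1) → ℝ) =
            Fin.cons s x + Fin.cons t y := by
          ext i
          refine Fin.cases ?_ (fun j => ?_) i <;> simp
        simpa [hcons] using hfgh (Fin.cons s x) (Fin.cons t y)
    rw [lintegral_const_mul _ hf'.lintegral_prod_right'] at key
    rwa [pow_succ', mul_assoc, ← mul_assoc (4 ^ n)]

/-- Midpoint Prékopa–Leindler inequality on Euclidean space. -/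
theorem EuclideanSpace.four_pow_mul_lintegral_mul_le {n : ℕ}
    {f g h : EuclideanSpace ℝ (Fin n) → ℝ≥0∞} (hf : Measurable f)
    (hg : Measurable g) (hh : Measurable h)
    (hfgh : ∀ x y, f x * g y ≤ h (x + y) ^ 2) :
    4 ^ n * ((∫⁻ x, f x) * ∫⁻ x, g x) ≤ (∫⁻ x, h x) ^ 2 := by
  have e := PiLp.volume_preserving_toLp (Fin n)
  rw [← e.lintegral_comp hf, ← e.lintegral_comp hg, ← e.lintegral_comp hh]
  exact _root_.four_pow_mul_lintegral_mul_le (hf.comp e.measurable) (hg.comp e.measurable)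
    (hh.comp e.measurable) fun x y => hfgh _ _

open scoped Pointwise in
theorem lintegral_indicator_smul_exp_neg_mul_sq {n : ℕ} {K : Set (EuclideanSpace ℝ (Fin n))}
    (hK : IsCompact K) {r : ℝ} (hr : 0 < r) (k : ℝ) :
    ∫⁻ y, (r • K).indicator (fun y => ENNReal.ofReal (Real.exp (-k * ‖y‖ ^ 2))) y =
      ENNReal.ofReal (r ^ n * ∫ x in K, Real.exp (-(k * r ^ 2) * ‖x‖ ^ 2)) := by
  have hrK : IsCompact (r • K) := hK.smul r
  have hint : IntegrableOn (fun y => Real.exp (-k * ‖y‖ ^ 2)) (r • K) volume :=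
    ContinuousOn.integrableOn_compact hrK (by fun_prop)
  rw [lintegral_indicator hrK.measurableSet, ← ofReal_integral_eq_lintegral_ofReal hint
    (Filter.Eventually.of_forall fun _ => (Real.exp_pos _).le)]
  have h := Measure.setIntegral_comp_smul_of_pos volume
    (fun y : EuclideanSpace ℝ (Fin n) => Real.exp (-k * ‖y‖ ^ 2)) K hr
  have hnorm : ∀ x : EuclideanSpace ℝ (Fin n),
      -k * ‖r • x‖ ^ 2 = -(k * r ^ 2) * ‖x‖ ^ 2 := fun x => by
    rw [norm_smul, Real.norm_of_nonneg hr.le]; ring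
  simp only [hnorm, finrank_euclideanSpace_fin, smul_eq_mul] at h
  rw [h, mul_inv_cancel_left₀ (pow_pos hr n).ne']

theorem norm_add_sq_div_add_le {E : Type*} [SeminormedAddCommGroup E] (x y : E) {a b : ℝ}
    (ha : 0 < a) (hb : 0 < b) :
    ‖x + y‖ ^ 2 / (a + b) ≤ ‖x‖ ^ 2 / a + ‖y‖ ^ 2 / b := by
  calc ‖x + y‖ ^ 2 / (a + b) ≤ (‖x‖ + ‖y‖) ^ 2 / (a + b) := by gcongr; exact norm_add_le x y
    _ ≤ ‖x‖ ^ 2 / a + ‖y‖ ^ 2 / b := by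
      rw [div_add_div _ _ ha.ne' hb.ne', div_le_div_iff₀ (by positivity) (by positivity)]
      nlinarith [sq_nonneg (‖x‖ * b - ‖y‖ * a)]

open scoped Pointwise in
/-- Midpoint log-concavity of `a ↦ aⁿ ∫_K exp (-a c ‖x‖²)`. -/
theorem mul_pow_mul_integral_exp_mul_le {n : ℕ} {K : Set (EuclideanSpace ℝ (Fin n))}
    (hKconv : Convex ℝ K) (hK : IsCompact K) {c : ℝ} (hc : 0 ≤ c) {a b : ℝ} (ha : 0 < a)
    (hb : 0 < b) (hab : a + b = 2) :
    (a * b) ^ n * ((∫ x in K, Real.exp (-(c * a) * ‖x‖ ^ 2)) *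
      ∫ x in K, Real.exp (-(c * b) * ‖x‖ ^ 2)) ≤
    (∫ x in K, Real.exp (-c * ‖x‖ ^ 2)) ^ 2 := by
  have hmeas : ∀ r k : ℝ, Measurable ((r • K).indicator
      fun y => ENNReal.ofReal (Real.exp (-k * ‖y‖ ^ 2))) := fun r k =>
    Measurable.indicator (by fun_prop) (hK.smul r).measurableSet
  have key := EuclideanSpace.four_pow_mul_lintegral_mul_le (hmeas a (c / a)) (hmeas b (c / b))
    (hmeas 2 (c / 4)) fun x y => by
      by_cases hx : x ∈ a • K
      swap
      · simp [hx]
      by_cases hy : y ∈ b • K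
      swap
      · simp [hy]
      have hxy : x + y ∈ (2 : ℝ) • K := by
        rw [← hab, hKconv.add_smul ha.le hb.le]
        exact Set.add_mem_add hx hy
      rw [Set.indicator_of_mem hx, Set.indicator_of_mem hy, Set.indicator_of_mem hxy,
        ← ENNReal.ofReal_mul (Real.exp_pos _).le, ← ENNReal.ofReal_pow (Real.exp_pos _).le,
        ← Real.exp_add, ← Real.exp_nat_mul]
      refine ENNReal.ofReal_le_ofReal (Real.exp_le_exp.2 ?_)
      have h := mul_le_mul_of_nonneg_left (norm_add_sq_div_add_le x y ha hb) hc
      rw [hab] at h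
      calc -(c / a) * ‖x‖ ^ 2 + -(c / b) * ‖y‖ ^ 2 =
            -(c * (‖x‖ ^ 2 / a + ‖y‖ ^ 2 / b)) := by ring
        _ ≤ -(c * (‖x + y‖ ^ 2 / 2)) := neg_le_neg h
        _ = _ := by push_cast; ring
  have hnn : ∀ k : ℝ, 0 ≤ ∫ x in K, Real.exp (-k * ‖x‖ ^ 2) := fun k =>
    integral_nonneg fun _ => (Real.exp_pos _).le
  rw [lintegral_indicator_smul_exp_neg_mul_sq hK ha,
    lintegral_indicator_smul_exp_neg_mul_sq hK hb,
    lintegral_indicator_smul_exp_neg_mul_sq hK two_pos,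
    show c / a * a ^ 2 = c * a by field_simp, show c / b * b ^ 2 = c * b by field_simp,
    show c / 4 * 2 ^ 2 = c by ring, show (4 : ℝ≥0∞) = ENNReal.ofReal 4 by simp,
    ← ENNReal.ofReal_pow (by norm_num), ← ENNReal.ofReal_mul (mul_nonneg (by positivity) (hnn _)),
    ← ENNReal.ofReal_mul (by positivity),
    ← ENNReal.ofReal_pow (mul_nonneg (by positivity) (hnn _)),
    ENNReal.ofReal_le_ofReal_iff (by positivity)] at key
  have h4 : ((2 : ℝ) ^ n) ^ 2 = 4 ^ n := by rw [← pow_mul, mul_comm, pow_mul]; norm_num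
  rw [mul_pow _ _ 2, h4] at key
  refine le_trans (le_of_eq ?_) (le_of_mul_le_mul_left key (by positivity))
  rw [mul_pow]
  ring

theorem one_le_one_add_two_div_mul_pow {n : ℕ} (hn : 2 ≤ n) :
    1 ≤ (1 + 2 / (n : ℝ)) * ((1 - 1 / n) * (1 + 1 / n)) ^ n := by
  have hn' : (2 : ℝ) ≤ n := by exact_mod_cast hn
  have hinv : 1 / (n : ℝ) ≤ 1 / 2 := one_div_le_one_div_of_le two_pos hn'
  have hpos : 0 < 1 / (n : ℝ) := by positivity
  have hbern := one_add_mul_le_pow (a := -(1 / (n : ℝ)) ^ 2) (by nlinarith) n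
  have hlin : 1 + (n : ℝ) * -(1 / (n : ℝ)) ^ 2 = 1 - 1 / n := by field_simp; ring
  have hsq : (1 - 1 / (n : ℝ)) * (1 + 1 / n) = 1 + -(1 / (n : ℝ)) ^ 2 := by ring
  rw [hlin, ← hsq] at hbern
  calc (1 : ℝ) ≤ (1 + 2 / n) * (1 - 1 / n) := by
        rw [show 2 / (n : ℝ) = 2 * (1 / n) by ring]; nlinarith
    _ ≤ _ := by gcongr

/-- Variance bound at the fixed cooling rate `1 + 1/n`: for a convex body `K`
in `ℝⁿ` with `n ≥ 3` and `α = 1/n`,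
`(∫_K e^{-(1-α)‖x‖²/(2σ²)})·(∫_K e^{-(1+α)‖x‖²/(2σ²)}) ≤
 (1 + 2/n)·(∫_K e^{-‖x‖²/(2σ²)})²`. -/
theorem fixed_rate_variance_bound
    (n : ℕ) (hn : 3 ≤ n)
    (K : Set (EuclideanSpace ℝ (Fin n)))
    (hKconv : Convex ℝ K) (hKcomp : IsCompact K) (hKint : (interior K).Nonempty)
    (σ : ℝ) (hσ : 0 < σ) :
    (∫ x in K, Real.exp (-(1 - 1 / (n : ℝ)) * ‖x‖ ^ 2 / (2 * σ ^ 2))) *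
      (∫ x in K, Real.exp (-(1 + 1 / (n : ℝ)) * ‖x‖ ^ 2 / (2 * σ ^ 2))) ≤
    (1 + 2 / (n : ℝ)) * (∫ x in K, Real.exp (-‖x‖ ^ 2 / (2 * σ ^ 2))) ^ 2 := by
  have hn' : (3 : ℝ) ≤ n := by exact_mod_cast hn
  have hinv : 1 / (n : ℝ) ≤ 1 / 3 := one_div_le_one_div_of_le three_pos hn'
  have key := mul_pow_mul_integral_exp_mul_le hKconv hKcomp (c := 1 / (2 * σ ^ 2))
    (by positivity) (a := 1 - 1 / (n : ℝ)) (b := 1 + 1 / n) (by linarith) (by positivity)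
    (by ring)
  have hexp : ∀ a : ℝ, ∫ x in K, Real.exp (-(1 / (2 * σ ^ 2) * a) * ‖x‖ ^ 2) =
      ∫ x in K, Real.exp (-a * ‖x‖ ^ 2 / (2 * σ ^ 2)) := fun a => by
    refine integral_congr_ae (Filter.Eventually.of_forall fun x => ?_)
    simp only
    congr 1
    ring
  have hexp_one := hexp 1
  simp only [mul_one, neg_one_mul] at hexp_one
  rw [hexp, hexp, hexp_one] at key
  set P := (∫ x in K, Real.exp (-(1 - 1 / (n : ℝ)) * ‖x‖ ^ 2 / (2 * σ ^ 2))) *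
    (∫ x in K, Real.exp (-(1 + 1 / (n : ℝ)) * ‖x‖ ^ 2 / (2 * σ ^ 2)))
  have hP0 : 0 ≤ P := mul_nonneg (integral_nonneg fun _ => (Real.exp_pos _).le)
    (integral_nonneg fun _ => (Real.exp_pos _).le)
  calc P ≤ (1 + 2 / (n : ℝ)) * ((1 - 1 / n) * (1 + 1 / n)) ^ n * P :=
        le_mul_of_one_le_left hP0 (one_le_one_add_two_div_mul_pow (by omega))
    _ = (1 + 2 / (n : ℝ)) * (((1 - 1 / n) * (1 + 1 / n)) ^ n * P) := by ring
    _ ≤ _ := by gcongr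
end

section
/- Let n ≥ 1, C > 0, and let K ⊆ ℝⁿ be a convex body with K ⊆ C√n·B_n. Let σ > 0 with σ² ≤ C²·n, and set α = σ²/(2C²n). Define F(s) = ∫_K exp(−‖x‖²/(2s)) dx for s > 0. Then F(σ²/(1+α)) · F(σ²/(1−α)) < (1 + σ²/(C²n)) · F(σ²)². -/
open MeasureTheory

theorem real_midpoint_eq (x y : ℝ) : midpoint ℝ x y = (x + y) * (1 / 2) := by
  rw [midpoint_eq_smul_add, invOf_eq_inv, smul_eq_mul]; ring

/-- One-dimensional Brunn–Minkowski inequality for midpoints of compact sets. -/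
theorem IsCompact.volume_add_volume_le_two_mul {A B E : Set ℝ} (hA : IsCompact A)
    (hB : IsCompact B) (hA' : A.Nonempty) (hB' : B.Nonempty)
    (h : ∀ a ∈ A, ∀ b ∈ B, midpoint ℝ a b ∈ E) :
    volume A + volume B ≤ 2 * volume E := by
  obtain ⟨a, ha, hamax⟩ := hA.exists_isGreatest hA'
  obtain ⟨b, hb, hbmin⟩ := hB.exists_isLeast hB'
  have hvolA : volume ((fun x => x - b) ⁻¹' A) = volume A := by
    simp_rw [sub_eq_add_neg]
    exact measure_preimage_add_right volume (-b) A
  have hvolB : volume ((fun x => x - a) ⁻¹' B) = volume B := by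
    simp_rw [sub_eq_add_neg]
    exact measure_preimage_add_right volume (-a) B
  have hvolE : volume ((fun x => x * (1 / 2)) ⁻¹' E) = 2 * volume E := by
    rw [Real.volume_preimage_mul_right (by norm_num)]
    norm_num
  have hdisj : AEDisjoint volume ((fun x => x - b) ⁻¹' A) ((fun x => x - a) ⁻¹' B) := by
    refine measure_mono_null (t := {a + b}) (fun x hx => ?_) (by simp)
    have h1 := hamax hx.1
    have h2 := hbmin hx.2
    simp only [Set.mem_singleton_iff]
    linarith
  rw [← hvolA, ← hvolB, ← hvolE, ← measure_union₀ ?_ hdisj]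
  · refine measure_mono (Set.union_subset (fun x hx => ?_) fun x hx => ?_)
    · have := h _ hx b hb
      rw [real_midpoint_eq] at this
      simpa using this
    · have := h a ha _ hx
      rw [real_midpoint_eq] at this
      simpa using this
  · exact (hB.measurableSet.preimage (measurable_id.sub_const a)).nullMeasurableSet

/-- One-dimensional Brunn–Minkowski inequality for midpoints of measurable sets. -/
theorem MeasurableSet.volume_add_volume_le_two_mul {A B E : Set ℝ} (hA : MeasurableSet A)
    (hB : MeasurableSet B) (hA' : A.Nonempty) (hB' : B.Nonempty)
    (h : ∀ a ∈ A, ∀ b ∈ B, midpoint ℝ a b ∈ E) :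
    volume A + volume B ≤ 2 * volume E := by
  rw [hA.measure_eq_iSup_isCompact, hB.measure_eq_iSup_isCompact]
  simp_rw [iSup_and']
  refine ENNReal.biSup_add_biSup_le' ⟨∅, by simp⟩ ⟨∅, by simp⟩ fun S hS T hT => ?_
  obtain ⟨a, ha⟩ := hA'
  obtain ⟨b, hb⟩ := hB'
  refine (add_le_add (measure_mono (Set.subset_insert a S))
    (measure_mono (Set.subset_insert b T))).trans ?_
  refine (hS.2.insert a).volume_add_volume_le_two_mul (hT.2.insert b)
    (Set.insert_nonempty _ _) (Set.insert_nonempty _ _) fun x hx y hy => h x ?_ y ?_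
  · exact Set.insert_subset ha hS.1 hx
  · exact Set.insert_subset hb hT.1 hy

/-- Additive form of the one-dimensional Prékopa–Leindler inequality, for functions with the
same supremum. -/
theorem lintegral_add_lintegral_le_two_mul {f g h : ℝ → ℝ} (hf : Measurable f)
    (hg : Measurable g) (hh : Measurable h) (hf0 : 0 ≤ f) (hg0 : 0 ≤ g) (hh0 : 0 ≤ h)
    (hsup : ∀ t, (∃ x, t < f x) ↔ ∃ y, t < g y)
    (hfgh : ∀ x y, f x * g y ≤ h (midpoint ℝ x y) ^ 2) :
    (∫⁻ x, ENNReal.ofReal (f x)) + ∫⁻ x, ENNReal.ofReal (g x) ≤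
      2 * ∫⁻ x, ENNReal.ofReal (h x) := by
  rw [lintegral_eq_lintegral_meas_lt volume (.of_forall hf0) hf.aemeasurable,
    lintegral_eq_lintegral_meas_lt volume (.of_forall hg0) hg.aemeasurable,
    lintegral_eq_lintegral_meas_lt volume (.of_forall hh0) hh.aemeasurable]
  have hanti : Antitone fun t => volume {a | t < h a} :=
    fun s t hst => measure_mono fun x (hx : t < h x) => hst.trans_lt hx
  have hanti' : Antitone fun t => volume {a | t < f a} :=
    fun s t hst => measure_mono fun x (hx : t < f x) => hst.trans_lt hx
  rw [← lintegral_add_left hanti'.measurable, ← lintegral_const_mul _ hanti.measurable]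
  refine setLIntegral_mono (hanti.measurable.const_mul 2) fun t ht => ?_
  by_cases hne : ∃ x, t < f x
  · refine (measurableSet_lt measurable_const hf).volume_add_volume_le_two_mul
      (measurableSet_lt measurable_const hg) hne ((hsup t).1 hne) fun a ha b hb => ?_
    have ht' : 0 < t := ht
    have ha' : t < f a := ha
    have hb' : t < g b := hb
    refine lt_of_pow_lt_pow_left₀ 2 (hh0 _) (lt_of_lt_of_le ?_ (hfgh a b))
    nlinarith
  · have hne' := mt (hsup t).2 hne
    push Not at hne hne'
    simp [fun x => not_lt.2 (hne x), fun x => not_lt.2 (hne' x)]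

theorem ENNReal.mul_le_sq_of_add_le_two_mul {p q r : ENNReal} (h : p + q ≤ 2 * r) :
    p * q ≤ r ^ 2 := by
  induction r with
  | top => simp
  | coe r =>
    have hp : p ≠ ⊤ := ne_top_of_le_ne_top (by finiteness) (le_self_add.trans h)
    have hq : q ≠ ⊤ := ne_top_of_le_ne_top (by finiteness) (le_add_self.trans h)
    lift p to NNReal using hp
    lift q to NNReal using hq
    norm_cast at h ⊢
    rw [← NNReal.coe_le_coe] at h ⊢
    push_cast at h ⊢
    have := p.coe_nonneg
    have := q.coe_nonneg
    nlinarith [sq_nonneg ((p : ℝ) - q)]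

theorem lintegral_ofReal_div {f : ℝ → ℝ} (hf : Measurable f) {c : ℝ} (hc : 0 < c) :
    ∫⁻ x, ENNReal.ofReal (f x) = ENNReal.ofReal c * ∫⁻ x, ENNReal.ofReal (f x / c) := by
  rw [← lintegral_const_mul _ (hf.div_const c).ennreal_ofReal]
  refine lintegral_congr fun x => ?_
  rw [← ENNReal.ofReal_mul hc.le, mul_div_cancel₀ _ hc.ne']

/-- The one-dimensional Prékopa–Leindler inequality for bounded functions. -/
theorem prekopaLeindler_real_of_bddAbove {f g h : ℝ → ℝ} (hf : Measurable f)
    (hg : Measurable g) (hh : Measurable h) (hf0 : 0 ≤ f) (hg0 : 0 ≤ g) (hh0 : 0 ≤ h)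
    (hfb : BddAbove (Set.range f)) (hgb : BddAbove (Set.range g))
    (hfgh : ∀ x y, f x * g y ≤ h (midpoint ℝ x y) ^ 2) :
    (∫⁻ x, ENNReal.ofReal (f x)) * ∫⁻ x, ENNReal.ofReal (g x) ≤
      (∫⁻ x, ENNReal.ofReal (h x)) ^ 2 := by
  rcases (Real.iSup_nonneg hf0).eq_or_lt with ha | ha
  · have : ∀ x, ENNReal.ofReal (f x) = 0 := fun x =>
      ENNReal.ofReal_of_nonpos (ha ▸ le_ciSup hfb x)
    simp [this]
  rcases (Real.iSup_nonneg hg0).eq_or_lt with hb | hb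
  · have : ∀ x, ENNReal.ofReal (g x) = 0 := fun x =>
      ENNReal.ofReal_of_nonpos (hb ▸ le_ciSup hgb x)
    simp [this]
  set a := ⨆ x, f x
  set b := ⨆ x, g x
  have hc : 0 < √(a * b) := Real.sqrt_pos.2 (mul_pos ha hb)
  have hc2 : √(a * b) ^ 2 = a * b := Real.sq_sqrt (mul_pos ha hb).le
  have key := lintegral_add_lintegral_le_two_mul (hf.div_const a) (hg.div_const b)
    (hh.div_const √(a * b)) (fun x => div_nonneg (hf0 x) ha.le)
    (fun x => div_nonneg (hg0 x) hb.le) (fun x => div_nonneg (hh0 x) hc.le)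
    (fun t => by
      simp_rw [lt_div_iff₀ ha, lt_div_iff₀ hb]
      rw [← lt_ciSup_iff hfb, ← lt_ciSup_iff hgb]
      change t * a < a ↔ t * b < b
      rw [mul_lt_iff_lt_one_left ha, mul_lt_iff_lt_one_left hb])
    (fun x y => by
      rw [div_mul_div_comm, div_pow, hc2]
      exact div_le_div_of_nonneg_right (hfgh x y) (mul_pos ha hb).le)
  rw [lintegral_ofReal_div hf ha, lintegral_ofReal_div hg hb, lintegral_ofReal_div hh hc, mul_pow,
    ← ENNReal.ofReal_pow hc.le, hc2, mul_mul_mul_comm, ← ENNReal.ofReal_mul ha.le]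
  gcongr
  exact ENNReal.mul_le_sq_of_add_le_two_mul key

theorem lintegral_eq_iSup_lintegral_min {α : Type*} [MeasurableSpace α] {μ : Measure α}
    {f : α → ENNReal} (hf : Measurable f) :
    ∫⁻ x, f x ∂μ = ⨆ N : ℕ, ∫⁻ x, min (f x) N ∂μ := by
  rw [← lintegral_iSup (fun N => hf.min measurable_const)
    fun M N hMN x => min_le_min_left _ (by exact_mod_cast hMN)]
  refine lintegral_congr fun x => ?_
  rw [← inf_iSup_eq, ENNReal.iSup_natCast, inf_top_eq]

/-- The one-dimensional Prékopa–Leindler inequality. -/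
theorem prekopaLeindler_real_s19 {f g h : ℝ → ENNReal} (hf : Measurable f)
    (hg : Measurable g) (hh : Measurable h)
    (hfgh : ∀ x y, f x * g y ≤ h (midpoint ℝ x y) ^ 2) :
    (∫⁻ x, f x) * ∫⁻ x, g x ≤ (∫⁻ x, h x) ^ 2 := by
  rw [lintegral_eq_iSup_lintegral_min hf, lintegral_eq_iSup_lintegral_min hg, ENNReal.iSup_mul]
  simp_rw [ENNReal.mul_iSup]
  refine iSup₂_le fun M N => ?_
  have hM : ∀ x, min (f x) M ≠ ⊤ := fun x => ne_top_of_le_ne_top (by simp) (min_le_right _ _)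
  have hN : ∀ x, min (g x) N ≠ ⊤ := fun x => ne_top_of_le_ne_top (by simp) (min_le_right _ _)
  have hL : ∀ x, min (h x) (max M N : ℕ) ≠ ⊤ :=
    fun x => ne_top_of_le_ne_top (ENNReal.natCast_ne_top _) (min_le_right _ _)
  have key := prekopaLeindler_real_of_bddAbove
    (hf.min (measurable_const (a := (M : ENNReal)))).ennreal_toReal
    (hg.min (measurable_const (a := (N : ENNReal)))).ennreal_toReal
    (hh.min (measurable_const (a := ((max M N : ℕ) : ENNReal)))).ennreal_toReal
    (fun _ => ENNReal.toReal_nonneg) (fun _ => ENNReal.toReal_nonneg)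
    (fun _ => ENNReal.toReal_nonneg)
    ⟨M, by
      rintro _ ⟨x, rfl⟩
      exact ENNReal.toReal_le_of_le_ofReal (by positivity) (by simp)⟩
    ⟨N, by
      rintro _ ⟨x, rfl⟩
      exact ENNReal.toReal_le_of_le_ofReal (by positivity) (by simp)⟩
    (fun x y => by
      rw [← ENNReal.toReal_mul, ← ENNReal.toReal_pow]
      refine ENNReal.toReal_mono (ENNReal.pow_ne_top (hL _)) ?_
      rcases min_cases (h (midpoint ℝ x y)) (max M N : ℕ) with ⟨he, -⟩ | ⟨he, -⟩ <;> rw [he]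
      · exact (mul_le_mul' (min_le_left _ _) (min_le_left _ _)).trans (hfgh x y)
      · rw [sq]
        refine mul_le_mul' ((min_le_right _ _).trans ?_) ((min_le_right _ _).trans ?_)
        · exact_mod_cast le_max_left M N
        · exact_mod_cast le_max_right M N)
  simp_rw [ENNReal.ofReal_toReal (hM _), ENNReal.ofReal_toReal (hN _),
    ENNReal.ofReal_toReal (hL _)] at key
  refine key.trans ?_
  gcongr
  exact min_le_left _ _

/-- The Prékopa–Leindler inequality (with weight `1/2`) on `ℝⁿ`. -/
theorem prekopaLeindler_pi_s19 {n : ℕ} {f g h : (Fin n → ℝ) → ENNReal} (hf : Measurable f)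
    (hg : Measurable g) (hh : Measurable h)
    (hfgh : ∀ x y, f x * g y ≤ h (midpoint ℝ x y) ^ 2) :
    (∫⁻ x, f x) * ∫⁻ x, g x ≤ (∫⁻ x, h x) ^ 2 := by
  induction n with
  | zero =>
    simp only [Measure.volume_pi_eq_dirac (0 : Fin 0 → ℝ), lintegral_dirac]
    simpa using hfgh 0 0
  | succ n ih =>
    let e := (MeasurableEquiv.piFinSuccAbove (fun _ : Fin (n + 1) => ℝ) 0).symm
    have he : MeasurePreserving e :=
      (volume_preserving_piFinSuccAbove (fun _ : Fin (n + 1) => ℝ) 0).symm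
    have hfub : ∀ {u : (Fin (n + 1) → ℝ) → ENNReal}, Measurable u →
        ∫⁻ x, u x = ∫⁻ s : ℝ, ∫⁻ v : Fin n → ℝ, u (e (s, v)) := fun {u} hu => by
      rw [← he.lintegral_comp hu, Measure.volume_eq_prod,
        lintegral_prod (fun p => u (e p)) (hu.comp e.measurable).aemeasurable]
    have hmeas : ∀ {u : (Fin (n + 1) → ℝ) → ENNReal}, Measurable u →
        Measurable fun s : ℝ => ∫⁻ v : Fin n → ℝ, u (e (s, v)) := fun {u} hu =>
      Measurable.lintegral_prod_right (f := fun s v => u (e (s, v))) (hu.comp e.measurable)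
    have hsec : ∀ {u : (Fin (n + 1) → ℝ) → ENNReal}, Measurable u → ∀ s : ℝ,
        Measurable fun v : Fin n → ℝ => u (e (s, v)) := fun {u} hu s =>
      (hu.comp e.measurable).comp measurable_prodMk_left
    have hmid : ∀ (s t : ℝ) (v w : Fin n → ℝ),
        midpoint ℝ (e (s, v)) (e (t, w)) = e (midpoint ℝ s t, midpoint ℝ v w) := by
      intro s t v w
      have hcons : ∀ p, e p = Fin.cons p.1 p.2 := fun p => by
        simp [e, MeasurableEquiv.piFinSuccAbove, Fin.insertNthEquiv]
      ext i
      rw [hcons, hcons, hcons]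
      refine Fin.cases ?_ (fun j => ?_) i <;>
        simp [midpoint_eq_smul_add, mul_add]
    rw [hfub hf, hfub hg, hfub hh]
    refine prekopaLeindler_real_s19 (hmeas hf) (hmeas hg) (hmeas hh) fun s t => ?_
    refine ih (hsec hf s) (hsec hg t) (hsec hh _) fun v w => ?_
    rw [← hmid]
    exact hfgh _ _

/-- The Prékopa–Leindler inequality (with weight `1/2`) on Euclidean space. -/
theorem prekopaLeindler_euclideanSpace_s19 {n : ℕ} {f g h : EuclideanSpace ℝ (Fin n) → ENNReal}
    (hf : Measurable f) (hg : Measurable g) (hh : Measurable h)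
    (hfgh : ∀ x y, f x * g y ≤ h (midpoint ℝ x y) ^ 2) :
    (∫⁻ x, f x) * ∫⁻ x, g x ≤ (∫⁻ x, h x) ^ 2 := by
  have hp := PiLp.volume_preserving_toLp (Fin n)
  rw [← hp.lintegral_comp hf, ← hp.lintegral_comp hg, ← hp.lintegral_comp hh]
  refine prekopaLeindler_pi_s19 (hf.comp hp.measurable) (hg.comp hp.measurable)
    (hh.comp hp.measurable) fun x y => ?_
  have hmid : WithLp.toLp 2 (midpoint ℝ x y) = midpoint ℝ (WithLp.toLp 2 x) (WithLp.toLp 2 y) := by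
    simp [midpoint_eq_smul_add]
  rw [hmid]
  exact hfgh _ _

/-- The Prékopa–Leindler inequality for Bochner integrals over a compact convex set. -/
theorem setIntegral_mul_setIntegral_le_sq {n : ℕ} {K : Set (EuclideanSpace ℝ (Fin n))}
    (hKconv : Convex ℝ K) (hKcomp : IsCompact K) {f g h : EuclideanSpace ℝ (Fin n) → ℝ}
    (hf : Continuous f) (hg : Continuous g) (hh : Continuous h)
    (hf0 : 0 ≤ f) (hg0 : 0 ≤ g) (hh0 : 0 ≤ h)
    (hfgh : ∀ x ∈ K, ∀ y ∈ K, f x * g y ≤ h (midpoint ℝ x y) ^ 2) :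
    (∫ x in K, f x) * ∫ x in K, g x ≤ (∫ x in K, h x) ^ 2 := by
  have hofReal : ∀ {u : EuclideanSpace ℝ (Fin n) → ℝ}, Continuous u → 0 ≤ u →
      ENNReal.ofReal (∫ x in K, u x) = ∫⁻ x, K.indicator (fun x => ENNReal.ofReal (u x)) x :=
    fun hu hu0 => by
      rw [ofReal_integral_eq_lintegral_ofReal (hu.continuousOn.integrableOn_compact hKcomp)
        (.of_forall hu0), lintegral_indicator hKcomp.measurableSet]
  have hmeas : ∀ {u : EuclideanSpace ℝ (Fin n) → ℝ}, Continuous u →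
      Measurable (K.indicator fun x => ENNReal.ofReal (u x)) :=
    fun hu => hu.measurable.ennreal_ofReal.indicator hKcomp.measurableSet
  have hh_int : 0 ≤ ∫ x in K, h x := integral_nonneg hh0
  rw [← ENNReal.ofReal_le_ofReal_iff (sq_nonneg _),
    ENNReal.ofReal_mul (integral_nonneg hf0), ENNReal.ofReal_pow hh_int, hofReal hf hf0,
    hofReal hg hg0, hofReal hh hh0]
  refine prekopaLeindler_euclideanSpace_s19 (hmeas hf) (hmeas hg) (hmeas hh) fun x y => ?_
  by_cases hx : x ∈ K
  · by_cases hy : y ∈ K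
    · rw [Set.indicator_of_mem hx, Set.indicator_of_mem hy,
        Set.indicator_of_mem (hKconv.midpoint_mem hx hy), ← ENNReal.ofReal_mul (hf0 x),
        ← ENNReal.ofReal_pow (hh0 _)]
      exact ENNReal.ofReal_le_ofReal (hfgh x hx y hy)
    · simp [hy]
  · simp [hx]

theorem two_mul_one_sub_sq_mul_norm_midpoint_sq_le {E : Type*} [NormedAddCommGroup E]
    [InnerProductSpace ℝ E] (x y : E) (α : ℝ) :
    2 * (1 - α ^ 2) * ‖midpoint ℝ x y‖ ^ 2 ≤ (1 + α) * ‖x‖ ^ 2 + (1 - α) * ‖y‖ ^ 2 := by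
  have hsq : 0 ≤ ‖(1 + α) • x - (1 - α) • y‖ ^ 2 := sq_nonneg _
  rw [norm_sub_sq_real, norm_smul, norm_smul, mul_pow, mul_pow, inner_smul_left, inner_smul_right,
    Real.norm_eq_abs, Real.norm_eq_abs, sq_abs, sq_abs] at hsq
  rw [midpoint_eq_smul_add, norm_smul, mul_pow, norm_add_sq_real]
  norm_num at hsq ⊢
  nlinarith

/-- The ratio of Gaussian integrals over a compact convex subset of the ball of radius `R`
satisfies the Prékopa–Leindler variance bound. -/
theorem gaussian_integral_mul_le {n : ℕ} {K : Set (EuclideanSpace ℝ (Fin n))}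
    (hKconv : Convex ℝ K) (hKcomp : IsCompact K) {R : ℝ} (hKsub : K ⊆ Metric.closedBall 0 R)
    {s : ℝ} (hs : 0 < s) (α : ℝ) :
    (∫ x in K, Real.exp (-‖x‖ ^ 2 / (2 * (s / (1 + α))))) *
      (∫ x in K, Real.exp (-‖x‖ ^ 2 / (2 * (s / (1 - α))))) ≤
    Real.exp (α ^ 2 * R ^ 2 / s) * (∫ x in K, Real.exp (-‖x‖ ^ 2 / (2 * s))) ^ 2 := by
  have hexp : Real.exp (α ^ 2 * R ^ 2 / s) = Real.exp (α ^ 2 * R ^ 2 / (2 * s)) ^ 2 := by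
    rw [← Real.exp_nat_mul]
    congr 1
    push_cast
    field_simp
  rw [hexp, ← mul_pow, ← integral_const_mul (Real.exp (α ^ 2 * R ^ 2 / (2 * s)))]
  refine setIntegral_mul_setIntegral_le_sq hKconv hKcomp ?_ ?_ ?_ (fun _ => by positivity)
    (fun _ => by positivity) (fun _ => by positivity) fun x hx y hy => ?_
  iterate 3 fun_prop
  have hz : ‖midpoint ℝ x y‖ ≤ R := by simpa using hKsub (hKconv.midpoint_mem hx hy)
  have hz2 : ‖midpoint ℝ x y‖ ^ 2 ≤ R ^ 2 := by gcongr
  have hmid := two_mul_one_sub_sq_mul_norm_midpoint_sq_le x y α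
  rw [← Real.exp_add, ← Real.exp_add, ← Real.exp_nat_mul, Real.exp_le_exp]
  have hl : -‖x‖ ^ 2 / (2 * (s / (1 + α))) + -‖y‖ ^ 2 / (2 * (s / (1 - α))) =
      (-((1 + α) * ‖x‖ ^ 2 + (1 - α) * ‖y‖ ^ 2)) / (2 * s) := by
    rw [← mul_div_assoc, ← mul_div_assoc, div_div_eq_mul_div, div_div_eq_mul_div]
    ring
  have hr : ((2 : ℕ) : ℝ) * (α ^ 2 * R ^ 2 / (2 * s) + -‖midpoint ℝ x y‖ ^ 2 / (2 * s)) =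
      (2 * (α ^ 2 * R ^ 2) - 2 * ‖midpoint ℝ x y‖ ^ 2) / (2 * s) := by
    push_cast
    ring
  rw [hl, hr]
  gcongr
  nlinarith [mul_le_mul_of_nonneg_left hz2 (sq_nonneg α)]

theorem exp_half_lt_one_add_two_mul {a : ℝ} (h0 : 0 < a) (h1 : a ≤ 1 / 2) :
    Real.exp (a / 2) < 1 + 2 * a := by
  have h := Real.exp_bound_div_one_sub_of_interval (x := a / 2) (by linarith) (by linarith)
  refine h.trans_lt ?_
  rw [div_lt_iff₀ (by linarith)]
  nlinarith

/-- Variance bound at the accelerated cooling rate `α = σ²/(2C²n)`: for a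
convex body `K ⊆ C√n·B_n` and `σ² ≤ C²n`, with
`F(s) = ∫_K exp(-‖x‖²/(2s)) dx`,
`F(σ²/(1+α))·F(σ²/(1-α)) < (1 + σ²/(C²n))·F(σ²)²`. -/
theorem accelerated_rate_variance_bound
    (n : ℕ) (hn : 1 ≤ n) (C : ℝ) (hC : 0 < C)
    (K : Set (EuclideanSpace ℝ (Fin n)))
    (hKconv : Convex ℝ K) (hKcomp : IsCompact K) (hKint : (interior K).Nonempty)
    (hKsub : K ⊆ Metric.closedBall 0 (C * Real.sqrt n))
    (σ : ℝ) (hσ : 0 < σ) (hσ2 : σ ^ 2 ≤ C ^ 2 * n) :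
    (∫ x in K, Real.exp (-‖x‖ ^ 2 / (2 * (σ ^ 2 / (1 + σ ^ 2 / (2 * C ^ 2 * n)))))) *
      (∫ x in K, Real.exp (-‖x‖ ^ 2 / (2 * (σ ^ 2 / (1 - σ ^ 2 / (2 * C ^ 2 * n)))))) <
    (1 + σ ^ 2 / (C ^ 2 * n)) *
      (∫ x in K, Real.exp (-‖x‖ ^ 2 / (2 * σ ^ 2))) ^ 2 := by
  have hn0 : (0 : ℝ) < n := by exact_mod_cast hn
  have hα0 : 0 < σ ^ 2 / (2 * C ^ 2 * n) := by positivity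
  have hα1 : σ ^ 2 / (2 * C ^ 2 * n) ≤ 1 / 2 := by
    rw [div_le_iff₀ (by positivity)]
    linarith
  have hα2 : 1 + σ ^ 2 / (C ^ 2 * n) = 1 + 2 * (σ ^ 2 / (2 * C ^ 2 * n)) := by
    field_simp
  have hexp : (σ ^ 2 / (2 * C ^ 2 * n)) ^ 2 * (C * √n) ^ 2 / σ ^ 2 =
      σ ^ 2 / (2 * C ^ 2 * n) / 2 := by
    rw [mul_pow, Real.sq_sqrt hn0.le]
    field_simp
  have key := gaussian_integral_mul_le hKconv hKcomp hKsub (pow_pos hσ 2) (σ ^ 2 / (2 * C ^ 2 * n))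
  rw [hexp] at key
  have hF : 0 < ∫ x in K, Real.exp (-‖x‖ ^ 2 / (2 * σ ^ 2)) := by
    have hcont : Continuous fun x : EuclideanSpace ℝ (Fin n) =>
      Real.exp (-‖x‖ ^ 2 / (2 * σ ^ 2)) := by fun_prop
    have : NeZero (volume.restrict K) := by
      refine ⟨fun h => ?_⟩
      rw [Measure.restrict_eq_zero] at h
      exact (Measure.measure_pos_of_nonempty_interior volume hKint).ne' h
    exact integral_exp_pos (hcont.continuousOn.integrableOn_compact hKcomp)
  refine key.trans_lt ?_
  rw [hα2]
  gcongr
  exact exp_half_lt_one_add_two_mul hα0 hα1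
end
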